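/- For i = 1, 2, let (Ȳ^i_t)_{t∈[0,T]} be mean-continuous families of Ê-integrable random variables with l^i_T ≤ Ê[ħ^i(T, Ȳ^i_T)] ≤ u^i_T, and let (Y^i, R^i) = BSP̂_{l^i}^{u^i}(Ȳ^i, ħ^i). Then for every t ∈ [0,T]: |(R^1_T − R^1_t) − (R^2_T − R^2_t)| ≤ sup_{s∈[t,T]} |Ê[Ȳ^1_s] − Ê[Ȳ^2_s]| + (2c̄/c̲) sup_{s∈[t,T]} Ê[|Ȳ^1_s − Ȳ^2_s|] + (1/c̲) { sup_{s∈[t,T]} max( |H̄^1(s, L^1_s(Ȳ^2_s), Ȳ^2_s) − H̄^2(s, L^1_s(Ȳ^2_s), Ȳ^2_s)|, |H̄^1(s, U^1_s(Ȳ^2_s), Ȳ^2_s) − H̄^2(s, U^1_s(Ȳ^2_s), Ȳ^2_s)| ) + sup_{s∈[t,T]} max( |l^1_s − l^2_s|, |u^1_s − u^2_s| ) }. -/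

import Mathlib

open MeasureTheory Set Filter

/-- The sublinear expectation `Ê[X] = sup_{P ∈ Ps} ∫ X dP`. -/
noncomputable def sublinE {Ω : Type*} [MeasurableSpace Ω] (Ps : Set (Measure Ω)) (X : Ω → ℝ) : ℝ :=
  sSup ((fun P => ∫ ω, X ω ∂P) '' Ps)

/-- `X` is Ê-integrable: measurable, integrable w.r.t. each `P ∈ Ps`, and
`sup_{P ∈ Ps} ∫ |X| dP < ∞`. -/
def EIntegrable {Ω : Type*} [MeasurableSpace Ω] (Ps : Set (Measure Ω)) (X : Ω → ℝ) : Prop :=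
  Measurable X ∧ (∀ P ∈ Ps, Integrable X P) ∧ ∃ M : ℝ, ∀ P ∈ Ps, (∫ ω, |X ω| ∂P) ≤ M

/-- Assumption (H_r) on the barriers `l, u` and the running loss function `hb`,
with constants `0 < cl ≤ cu` and `Ch > 0`. -/
def HrAssumption {Ω : Type*} [MeasurableSpace Ω] (T cl cu Ch : ℝ)
    (l u : ℝ → ℝ) (hb : ℝ → Ω → ℝ → ℝ) : Prop :=
  0 < cl ∧ cl ≤ cu ∧ 0 < Ch ∧
  ContinuousOn l (Icc 0 T) ∧ ContinuousOn u (Icc 0 T) ∧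
  (∃ M : ℝ, ∀ t ∈ Icc (0:ℝ) T, |l t| ≤ M ∧ |u t| ≤ M) ∧
  (∃ ε > 0, ∀ t ∈ Icc (0:ℝ) T, ε ≤ u t - l t) ∧
  (∀ t y, Measurable fun ω => hb t ω y) ∧
  (∀ ε > 0, ∃ δ > 0, ∀ (ω : Ω) (t t' y y' : ℝ),
      |t - t'| + |y - y'| < δ → |hb t ω y - hb t' ω y'| < ε) ∧
  (∀ t ω, StrictMono (hb t ω)) ∧
  (∀ t ω y, |hb t ω y| ≤ Ch * (1 + |y|)) ∧
  (∀ t ω y y', cl * |y - y'| ≤ |hb t ω y - hb t ω y'| ∧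
    |hb t ω y - hb t ω y'| ≤ cu * |y - y'|)

/-- `H̄(t, x, X) = Ê[hb(t, x + X − Ê[X])]`. -/
noncomputable def Hbar {Ω : Type*} [MeasurableSpace Ω] (Ps : Set (Measure Ω))
    (hb : ℝ → Ω → ℝ → ℝ) (t x : ℝ) (X : Ω → ℝ) : ℝ :=
  sublinE Ps (fun ω => hb t ω (x + X ω - sublinE Ps X))

/-- A family `(S_t)_{t ∈ [0,T]}` of Ê-integrable random variables which is continuous in mean. -/
def MeanContinuous {Ω : Type*} [MeasurableSpace Ω] (Ps : Set (Measure Ω)) (T : ℝ)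
    (S : ℝ → Ω → ℝ) : Prop :=
  (∀ t ∈ Icc (0:ℝ) T, EIntegrable Ps (S t)) ∧
  ∀ t ∈ Icc (0:ℝ) T,
    Tendsto (fun s => sublinE Ps fun ω => |S s ω - S t ω|) (nhdsWithin t (Icc 0 T)) (nhds 0)

/-- The minimality (Skorokhod) condition in its equivalent increment form: `R` may only
increase on intervals where `φ` stays strictly below `u` and may only decrease on intervals
where `φ` stays strictly above `l`. -/
def MinimalityIncr (T : ℝ) (φ l u R : ℝ → ℝ) : Prop :=
  ∀ s t : ℝ, 0 ≤ s → s < t → t ≤ T →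
    ((∀ v, s < v → v ≤ t → φ v < u v) → R s ≤ R t) ∧
    ((∀ v, s < v → v ≤ t → l v < φ v) → R t ≤ R s)

/-- `(Y, R)` solves the backward Skorokhod problem with sublinear expectation for the data
`(Ybar, hb, l, u)`. -/
def IsBSPsol {Ω : Type*} [MeasurableSpace Ω] (Ps : Set (Measure Ω)) (T : ℝ)
    (hb : ℝ → Ω → ℝ → ℝ) (l u : ℝ → ℝ) (Ybar Y : ℝ → Ω → ℝ) (R : ℝ → ℝ) : Prop :=
  (∀ t ∈ Icc (0:ℝ) T, ∀ ω, Y t ω = Ybar t ω + R T - R t) ∧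
  (∀ t ∈ Icc (0:ℝ) T, l t ≤ sublinE Ps (fun ω => hb t ω (Y t ω)) ∧
    sublinE Ps (fun ω => hb t ω (Y t ω)) ≤ u t) ∧
  ContinuousOn R (Icc 0 T) ∧ BoundedVariationOn R (Icc 0 T) ∧ R 0 = 0 ∧
  MinimalityIncr T (fun v => sublinE Ps (fun ω => hb v ω (Y v ω))) l u R

/-! A running loss has slopes between `cl` and `cu`, so the expected loss `x ↦ Ê[ħ(x + X)]` has
slope at least `cl` in `x` and is `cu`-Lipschitz in `X` for the norm `Ê|·|`. Write
`Kⁱ = Rⁱ_T - Rⁱ`. If the first expected loss is at most `l¹` at some time, comparing with the level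
`k` at which the first loss of `Ȳ² + k` equals `l¹` bounds `K¹ - k`, and comparing the two losses of
`Ȳ² + k` bounds `k - K²`; the second expected loss reaching `u²` is handled in the same way. So
wherever `K¹ - K²` exceeds the resulting bound `B`, the first problem is strictly above its lower
barrier and the second strictly below its upper one, and minimality forces `K¹ - K²` to be
nondecreasing there. As it vanishes at `T`, it never exceeds `B`. -/

section SublinearExpectation

variable {Ω : Type*} [MeasurableSpace Ω] {Ps : Set (Measure Ω)} {X Y : Ω → ℝ}

theorem integral_le_sublinE (hX : EIntegrable Ps X) {P : Measure Ω} (hP : P ∈ Ps) :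
    ∫ ω, X ω ∂P ≤ sublinE Ps X := by
  obtain ⟨-, -, M, hM⟩ := hX
  refine le_csSup ⟨M, forall_mem_image.2 fun Q hQ => ?_⟩ (mem_image_of_mem _ hP)
  exact (le_abs_self _).trans (abs_integral_le_integral_abs.trans (hM Q hQ))

theorem sublinE_le (hPs : Ps.Nonempty) {a : ℝ} (h : ∀ P ∈ Ps, ∫ ω, X ω ∂P ≤ a) :
    sublinE Ps X ≤ a :=
  csSup_le (hPs.image _) (forall_mem_image.2 h)

theorem sublinE_nonneg (hX : ∀ ω, 0 ≤ X ω) : 0 ≤ sublinE Ps X :=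
  Real.sSup_nonneg (forall_mem_image.2 fun _ _ => integral_nonneg hX)

theorem EIntegrable.mono (hY : EIntegrable Ps Y) (hX : Measurable X) (h : ∀ ω, |X ω| ≤ Y ω) :
    EIntegrable Ps X := by
  obtain ⟨-, hYi, M, hM⟩ := hY
  have hXi (P) (hP : P ∈ Ps) : Integrable X P :=
    (hYi P hP).mono' hX.aestronglyMeasurable (.of_forall h)
  refine ⟨hX, hXi, M, fun P hP => le_trans ?_ (hM P hP)⟩
  exact integral_mono (hXi P hP).abs (hYi P hP).abs fun ω => (h ω).trans (le_abs_self _)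

theorem EIntegrable.abs (hX : EIntegrable Ps X) : EIntegrable Ps fun ω => |X ω| := by
  obtain ⟨hm, hi, M, hM⟩ := hX
  exact ⟨hm.abs, fun P hP => (hi P hP).abs, M, by simpa only [abs_abs] using hM⟩

theorem EIntegrable.add (hX : EIntegrable Ps X) (hY : EIntegrable Ps Y) :
    EIntegrable Ps fun ω => X ω + Y ω := by
  obtain ⟨hXm, hXi, M, hM⟩ := hX
  obtain ⟨hYm, hYi, N, hN⟩ := hY
  refine ⟨hXm.add hYm, fun P hP => (hXi P hP).add (hYi P hP), M + N, fun P hP => ?_⟩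
  calc ∫ ω, |X ω + Y ω| ∂P
      ≤ ∫ ω, (|X ω| + |Y ω|) ∂P :=
        integral_mono ((hXi P hP).add (hYi P hP)).abs ((hXi P hP).abs.add (hYi P hP).abs)
          fun ω => abs_add_le (X ω) (Y ω)
    _ = ∫ ω, |X ω| ∂P + ∫ ω, |Y ω| ∂P := integral_add (hXi P hP).abs (hYi P hP).abs
    _ ≤ M + N := add_le_add (hM P hP) (hN P hP)

theorem EIntegrable.const_mul (hX : EIntegrable Ps X) (c : ℝ) :
    EIntegrable Ps fun ω => c * X ω := by
  obtain ⟨hm, hi, M, hM⟩ := hX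
  refine ⟨hm.const_mul c, fun P hP => (hi P hP).const_mul c, |c| * M, fun P hP => ?_⟩
  simp only [abs_mul, integral_const_mul]
  exact mul_le_mul_of_nonneg_left (hM P hP) (abs_nonneg c)

theorem EIntegrable.sub (hX : EIntegrable Ps X) (hY : EIntegrable Ps Y) :
    EIntegrable Ps fun ω => X ω - Y ω := by
  simpa only [neg_one_mul, ← sub_eq_add_neg] using hX.add (hY.const_mul (-1))

theorem eIntegrable_const (hprob : ∀ P ∈ Ps, IsProbabilityMeasure P) (c : ℝ) :
    EIntegrable Ps fun _ => c := by
  refine ⟨measurable_const, fun P hP => ?_, |c|, fun P hP => ?_⟩ <;> have := hprob P hP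
  · exact integrable_const c
  · simp

theorem sublinE_mono (hPs : Ps.Nonempty) (hX : EIntegrable Ps X) (hY : EIntegrable Ps Y)
    (h : ∀ ω, X ω ≤ Y ω) : sublinE Ps X ≤ sublinE Ps Y :=
  sublinE_le hPs fun P hP =>
    (integral_mono (hX.2.1 P hP) (hY.2.1 P hP) h).trans (integral_le_sublinE hY hP)

theorem sublinE_add_le (hPs : Ps.Nonempty) (hX : EIntegrable Ps X) (hY : EIntegrable Ps Y) :
    (sublinE Ps fun ω => X ω + Y ω) ≤ sublinE Ps X + sublinE Ps Y := by
  refine sublinE_le hPs fun P hP => ?_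
  rw [integral_add (hX.2.1 P hP) (hY.2.1 P hP)]
  exact add_le_add (integral_le_sublinE hX hP) (integral_le_sublinE hY hP)

theorem sublinE_const_mul {c : ℝ} (hc : 0 ≤ c) (X : Ω → ℝ) :
    (sublinE Ps fun ω => c * X ω) = c * sublinE Ps X := by
  simp only [sublinE, sSup_image', integral_const_mul]
  exact (Real.mul_iSup_of_nonneg hc _).symm

theorem sublinE_const (hPs : Ps.Nonempty) (hprob : ∀ P ∈ Ps, IsProbabilityMeasure P) (c : ℝ) :
    (sublinE Ps fun _ => c) = c := by
  have hint (P) (hP : P ∈ Ps) : ∫ _, c ∂P = c := by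
    have := hprob P hP
    simp
  rw [sublinE, image_congr hint, hPs.image_const, csSup_singleton]

theorem sublinE_add_const_le (hPs : Ps.Nonempty) (hprob : ∀ P ∈ Ps, IsProbabilityMeasure P)
    (hX : EIntegrable Ps X) (c : ℝ) :
    sublinE Ps X + c ≤ sublinE Ps fun ω => X ω + c := by
  have h := sublinE_add_le hPs (hX.add (eIntegrable_const hprob c)) (eIntegrable_const hprob (-c))
  simp only [add_neg_cancel_right, sublinE_const hPs hprob] at h
  linarith

theorem abs_sublinE_sub_le (hPs : Ps.Nonempty) (hX : EIntegrable Ps X) (hY : EIntegrable Ps Y) :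
    |sublinE Ps X - sublinE Ps Y| ≤ sublinE Ps fun ω => |X ω - Y ω| := by
  have sub_le {X Y : Ω → ℝ} (hX : EIntegrable Ps X) (hY : EIntegrable Ps Y) :
      sublinE Ps X - sublinE Ps Y ≤ sublinE Ps fun ω => |X ω - Y ω| := by
    have hXY := (hX.sub hY).abs
    rw [sub_le_iff_le_add']
    refine (sublinE_mono hPs hX (hY.add hXY) fun ω => ?_).trans (sublinE_add_le hPs hY hXY)
    linarith [le_abs_self (X ω - Y ω)]
  refine abs_sub_le_iff.2 ⟨sub_le hX hY, ?_⟩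
  simpa only [abs_sub_comm] using sub_le hY hX

theorem sublinE_abs_add_le (hPs : Ps.Nonempty) (hX : EIntegrable Ps X) (hY : EIntegrable Ps Y) :
    (sublinE Ps fun ω => |X ω + Y ω|) ≤
      (sublinE Ps fun ω => |X ω|) + sublinE Ps fun ω => |Y ω| :=
  (sublinE_mono hPs (hX.add hY).abs (hX.abs.add hY.abs) fun ω => abs_add_le (X ω) (Y ω)).trans
    (sublinE_add_le hPs hX.abs hY.abs)

theorem sublinE_abs_sub_le (hPs : Ps.Nonempty) (hX : EIntegrable Ps X) (hY : EIntegrable Ps Y) :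
    (sublinE Ps fun ω => |X ω - Y ω|) ≤
      (sublinE Ps fun ω => |X ω|) + sublinE Ps fun ω => |Y ω| :=
  (sublinE_mono hPs (hX.sub hY).abs (hX.abs.add hY.abs) fun ω => abs_sub (X ω) (Y ω)).trans
    (sublinE_add_le hPs hX.abs hY.abs)

end SublinearExpectation

namespace MeanContinuous

variable {Ω : Type*} [MeasurableSpace Ω] {Ps : Set (Measure Ω)} {T : ℝ} {S S' : ℝ → Ω → ℝ}

theorem continuousOn_sublinE_abs (hPs : Ps.Nonempty) (hS : MeanContinuous Ps T S) :
    ContinuousOn (fun s => sublinE Ps fun ω => |S s ω|) (Icc 0 T) := by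
  intro t ht
  refine tendsto_iff_dist_tendsto_zero.2
    (squeeze_zero' (.of_forall fun _ => dist_nonneg) ?_ (hS.2 t ht))
  filter_upwards [self_mem_nhdsWithin] with s hs
  have hs' := hS.1 s hs
  have ht' := hS.1 t ht
  exact (abs_sublinE_sub_le hPs hs'.abs ht'.abs).trans
    (sublinE_mono hPs (hs'.abs.sub ht'.abs).abs (hs'.sub ht').abs
      fun ω => abs_abs_sub_abs_le (S s ω) (S t ω))

theorem bddAbove_sublinE_abs (hPs : Ps.Nonempty) (hS : MeanContinuous Ps T S) :
    BddAbove ((fun s => sublinE Ps fun ω => |S s ω|) '' Icc 0 T) :=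
  isCompact_Icc.bddAbove_image (hS.continuousOn_sublinE_abs hPs)

theorem bddAbove_sublinE_abs_sub (hPs : Ps.Nonempty) (hS : MeanContinuous Ps T S)
    (hS' : MeanContinuous Ps T S') :
    BddAbove ((fun s => sublinE Ps fun ω => |S s ω - S' s ω|) '' Icc 0 T) := by
  obtain ⟨M, hM⟩ := hS.bddAbove_sublinE_abs hPs
  obtain ⟨M', hM'⟩ := hS'.bddAbove_sublinE_abs hPs
  refine ⟨M + M', forall_mem_image.2 fun s hs => ?_⟩
  exact (sublinE_abs_sub_le hPs (hS.1 s hs) (hS'.1 s hs)).trans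
    (add_le_add (hM (mem_image_of_mem _ hs)) (hM' (mem_image_of_mem _ hs)))

end MeanContinuous

/-- A random loss function at a fixed time: the slopes of `f ω` lie between `cl` and `cu`, as in
(H_r), while the growth bound is weakened to Ê-integrability of the loss at `0`. -/
structure IsLossFunction {Ω : Type*} [MeasurableSpace Ω] (Ps : Set (Measure Ω)) (cl cu : ℝ)
    (f : Ω → ℝ → ℝ) : Prop where
  slope_pos : 0 < cl
  slope_le_slope : cl ≤ cu
  measurable : ∀ y, Measurable fun ω => f ω y
  eIntegrable_zero : EIntegrable Ps fun ω => f ω 0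
  mul_sub_le : ∀ ω x y, x ≤ y → cl * (y - x) ≤ f ω y - f ω x
  abs_sub_le : ∀ ω x y, |f ω x - f ω y| ≤ cu * |x - y|

/-- The expected loss `Ê[f(x + X)]` of the position `X` raised by `x`. Unlike in `Hbar`, the
position is not centred. -/
noncomputable def expectedLoss {Ω : Type*} [MeasurableSpace Ω] (Ps : Set (Measure Ω))
    (f : Ω → ℝ → ℝ) (X : Ω → ℝ) (x : ℝ) : ℝ :=
  sublinE Ps fun ω => f ω (x + X ω)

theorem Hbar_eq_expectedLoss {Ω : Type*} [MeasurableSpace Ω] (Ps : Set (Measure Ω))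
    (hb : ℝ → Ω → ℝ → ℝ) (t x : ℝ) (X : Ω → ℝ) :
    Hbar Ps hb t x X = expectedLoss Ps (hb t) X (x - sublinE Ps X) := by
  simp only [Hbar, expectedLoss, sub_add_eq_add_sub]

namespace IsLossFunction

variable {Ω : Type*} [MeasurableSpace Ω] {Ps : Set (Measure Ω)} {cl cu x y δ : ℝ}
  {f f₁ f₂ : Ω → ℝ → ℝ} {X X₁ X₂ : Ω → ℝ}

theorem upper_slope_nonneg (hf : IsLossFunction Ps cl cu f) : 0 ≤ cu :=
  hf.slope_pos.le.trans hf.slope_le_slope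

theorem eIntegrable_comp (hf : IsLossFunction Ps cl cu f) (hX : EIntegrable Ps X) :
    EIntegrable Ps fun ω => f ω (X ω) := by
  have hcont (ω) : Continuous (f ω) :=
    (LipschitzWith.of_dist_le' (hf.abs_sub_le ω)).continuous
  have hmeas : Measurable fun ω => f ω (X ω) :=
    (measurable_uncurry_of_continuous_of_measurable (u := fun y ω => f ω y)
      hcont hf.measurable).comp (hX.1.prodMk measurable_id)
  refine (hf.eIntegrable_zero.abs.add (hX.abs.const_mul cu)).mono hmeas fun ω => ?_
  have hlip := hf.abs_sub_le ω (X ω) 0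
  rw [sub_zero] at hlip
  linarith [abs_sub_abs_le_abs_sub (f ω (X ω)) (f ω 0)]

theorem abs_sublinE_comp_sub_le (hPs : Ps.Nonempty) (hf : IsLossFunction Ps cl cu f)
    (hX₁ : EIntegrable Ps X₁) (hX₂ : EIntegrable Ps X₂) :
    |(sublinE Ps fun ω => f ω (X₁ ω)) - sublinE Ps fun ω => f ω (X₂ ω)| ≤
      cu * sublinE Ps fun ω => |X₁ ω - X₂ ω| := by
  have h₁ := hf.eIntegrable_comp hX₁
  have h₂ := hf.eIntegrable_comp hX₂
  calc |(sublinE Ps fun ω => f ω (X₁ ω)) - sublinE Ps fun ω => f ω (X₂ ω)|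
      ≤ sublinE Ps fun ω => |f ω (X₁ ω) - f ω (X₂ ω)| := abs_sublinE_sub_le hPs h₁ h₂
    _ ≤ sublinE Ps fun ω => cu * |X₁ ω - X₂ ω| :=
        sublinE_mono hPs (h₁.sub h₂).abs ((hX₁.sub hX₂).abs.const_mul cu)
          fun ω => hf.abs_sub_le ω (X₁ ω) (X₂ ω)
    _ = cu * sublinE Ps fun ω => |X₁ ω - X₂ ω| := sublinE_const_mul hf.upper_slope_nonneg _

variable (hPs : Ps.Nonempty) (hprob : ∀ P ∈ Ps, IsProbabilityMeasure P)
include hPs hprob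

theorem abs_expectedLoss_sub_le (hf : IsLossFunction Ps cl cu f) (hX₁ : EIntegrable Ps X₁)
    (hX₂ : EIntegrable Ps X₂) (x : ℝ) :
    |expectedLoss Ps f X₁ x - expectedLoss Ps f X₂ x| ≤
      cu * sublinE Ps fun ω => |X₁ ω - X₂ ω| := by
  have hx := eIntegrable_const hprob x
  simpa only [expectedLoss, add_sub_add_left_eq_sub] using
    hf.abs_sublinE_comp_sub_le hPs (hx.add hX₁) (hx.add hX₂)

theorem abs_expectedLoss_le (hf : IsLossFunction Ps cl cu f) (hX : EIntegrable Ps X) (x : ℝ) :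
    |expectedLoss Ps f X x| ≤
      (sublinE Ps fun ω => |f ω 0|) + cu * (|x| + sublinE Ps fun ω => |X ω|) := by
  have hx := eIntegrable_const hprob x
  have h_zero : |sublinE Ps fun ω => f ω 0| ≤ sublinE Ps fun ω => |f ω 0| := by
    simpa only [sub_zero, sublinE_const hPs hprob] using
      abs_sublinE_sub_le hPs hf.eIntegrable_zero (eIntegrable_const hprob 0)
  have h_sub : |expectedLoss Ps f X x - sublinE Ps fun ω => f ω 0| ≤
      cu * sublinE Ps fun ω => |x + X ω| := by
    simpa only [expectedLoss, sub_zero] using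
      hf.abs_sublinE_comp_sub_le hPs (hx.add hX) (eIntegrable_const hprob 0)
  have h_add : (sublinE Ps fun ω => |x + X ω|) ≤ |x| + sublinE Ps fun ω => |X ω| := by
    simpa only [sublinE_const hPs hprob] using sublinE_abs_add_le hPs hx hX
  linarith [mul_le_mul_of_nonneg_left h_add hf.upper_slope_nonneg,
    abs_sub_abs_le_abs_sub (expectedLoss Ps f X x) (sublinE Ps fun ω => f ω 0)]

theorem mul_sub_le_expectedLoss_sub (hf : IsLossFunction Ps cl cu f) (hX : EIntegrable Ps X)
    (hxy : x ≤ y) :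
    cl * (y - x) ≤ expectedLoss Ps f X y - expectedLoss Ps f X x := by
  have hint (z : ℝ) := hf.eIntegrable_comp ((eIntegrable_const hprob z).add hX)
  rw [le_sub_iff_add_le']
  refine (sublinE_add_const_le hPs hprob (hint x) _).trans
    (sublinE_mono hPs ((hint x).add (eIntegrable_const hprob _)) (hint y) fun ω => ?_)
  have hslope := hf.mul_sub_le ω (x + X ω) (y + X ω) (by linarith)
  rw [add_sub_add_right_eq_sub] at hslope
  linarith

theorem mul_sub_le_of_expectedLoss_le (hf : IsLossFunction Ps cl cu f) (hX : EIntegrable Ps X)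
    (hδ : 0 ≤ δ) (h : expectedLoss Ps f X y ≤ expectedLoss Ps f X x + δ) :
    cl * (y - x) ≤ δ := by
  rcases le_total x y with hxy | hyx
  · linarith [hf.mul_sub_le_expectedLoss_sub hPs hprob hX hxy]
  · exact (mul_nonpos_of_nonneg_of_nonpos hf.slope_pos.le (sub_nonpos.2 hyx)).trans hδ

theorem mul_abs_sub_le_abs_expectedLoss_sub (hf : IsLossFunction Ps cl cu f)
    (hX : EIntegrable Ps X) (x y : ℝ) :
    cl * |y - x| ≤ |expectedLoss Ps f X y - expectedLoss Ps f X x| := by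
  wlog hxy : x ≤ y generalizing x y
  · rw [abs_sub_comm, abs_sub_comm (expectedLoss Ps f X y)]
    exact this y x (le_of_not_ge hxy)
  rw [abs_of_nonneg (sub_nonneg.2 hxy)]
  exact (hf.mul_sub_le_expectedLoss_sub hPs hprob hX hxy).trans (le_abs_self _)

theorem mul_sub_le_of_expectedLoss_le_of_le_expectedLoss {k x₁ x₂ b : ℝ}
    (hf₁ : IsLossFunction Ps cl cu f₁) (hf₂ : IsLossFunction Ps cl cu f₂)
    (hX₁ : EIntegrable Ps X₁) (hX₂ : EIntegrable Ps X₂)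
    (h₁ : expectedLoss Ps f₁ X₁ x₁ ≤ expectedLoss Ps f₁ X₂ k) (h₂ : b ≤ expectedLoss Ps f₂ X₂ x₂) :
    cl * (x₁ - x₂) ≤ (cu * sublinE Ps fun ω => |X₁ ω - X₂ ω|) +
      |expectedLoss Ps f₁ X₂ k - expectedLoss Ps f₂ X₂ k| + |expectedLoss Ps f₁ X₂ k - b| := by
  have hpos := abs_sub_le_iff.1 (hf₁.abs_expectedLoss_sub_le hPs hprob hX₁ hX₂ x₁)
  have hloss := neg_abs_le (expectedLoss Ps f₁ X₂ k - expectedLoss Ps f₂ X₂ k)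
  have hbarrier := le_abs_self (expectedLoss Ps f₁ X₂ k - b)
  have hx₁k : cl * (x₁ - k) ≤ cu * sublinE Ps fun ω => |X₁ ω - X₂ ω| :=
    hf₁.mul_sub_le_of_expectedLoss_le hPs hprob hX₂ ((abs_nonneg _).trans
      (hf₁.abs_expectedLoss_sub_le hPs hprob hX₁ hX₂ x₁)) (by linarith)
  have hkx₂ : cl * (k - x₂) ≤
      |expectedLoss Ps f₁ X₂ k - expectedLoss Ps f₂ X₂ k| + |expectedLoss Ps f₁ X₂ k - b| :=
    hf₂.mul_sub_le_of_expectedLoss_le hPs hprob hX₂ (by positivity) (by linarith)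
  linarith

theorem mul_sub_le_of_le_expectedLoss_of_expectedLoss_le {k x₁ x₂ b : ℝ}
    (hf₁ : IsLossFunction Ps cl cu f₁) (hf₂ : IsLossFunction Ps cl cu f₂)
    (hX₁ : EIntegrable Ps X₁) (hX₂ : EIntegrable Ps X₂)
    (h₁ : expectedLoss Ps f₁ X₂ k ≤ expectedLoss Ps f₁ X₁ x₁) (h₂ : expectedLoss Ps f₂ X₂ x₂ ≤ b) :
    cl * (x₂ - x₁) ≤ (cu * sublinE Ps fun ω => |X₁ ω - X₂ ω|) +
      |expectedLoss Ps f₁ X₂ k - expectedLoss Ps f₂ X₂ k| + |expectedLoss Ps f₁ X₂ k - b| := by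
  have hpos := abs_sub_le_iff.1 (hf₁.abs_expectedLoss_sub_le hPs hprob hX₁ hX₂ x₁)
  have hloss := le_abs_self (expectedLoss Ps f₁ X₂ k - expectedLoss Ps f₂ X₂ k)
  have hbarrier := neg_abs_le (expectedLoss Ps f₁ X₂ k - b)
  have hkx₁ : cl * (k - x₁) ≤ cu * sublinE Ps fun ω => |X₁ ω - X₂ ω| :=
    hf₁.mul_sub_le_of_expectedLoss_le hPs hprob hX₂ ((abs_nonneg _).trans
      (hf₁.abs_expectedLoss_sub_le hPs hprob hX₁ hX₂ x₁)) (by linarith)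
  have hx₂k : cl * (x₂ - k) ≤
      |expectedLoss Ps f₁ X₂ k - expectedLoss Ps f₂ X₂ k| + |expectedLoss Ps f₁ X₂ k - b| :=
    hf₂.mul_sub_le_of_expectedLoss_le hPs hprob hX₂ (by positivity) (by linarith)
  linarith

theorem abs_expectedLoss_sub_expectedLoss_le {C₁ C₂ M N k : ℝ}
    (hf₁ : IsLossFunction Ps cl cu f₁) (hf₂ : IsLossFunction Ps cl cu f₂) (hX : EIntegrable Ps X)
    (hC₁ : (sublinE Ps fun ω => |f₁ ω 0|) ≤ C₁) (hC₂ : (sublinE Ps fun ω => |f₂ ω 0|) ≤ C₂)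
    (hN : (sublinE Ps fun ω => |X ω|) ≤ N) (hM : |expectedLoss Ps f₁ X k| ≤ M) :
    |expectedLoss Ps f₁ X k - expectedLoss Ps f₂ X k| ≤
      M + (C₂ + cu * ((M + (C₁ + cu * N)) / cl + N)) := by
  have hcu := hf₁.upper_slope_nonneg
  have hzero : |expectedLoss Ps f₁ X 0| ≤ C₁ + cu * N := by
    refine (hf₁.abs_expectedLoss_le hPs hprob hX 0).trans ?_
    rw [abs_zero, zero_add]
    gcongr
  have hk : |k| ≤ (M + (C₁ + cu * N)) / cl := by
    have hslope := hf₁.mul_abs_sub_le_abs_expectedLoss_sub hPs hprob hX 0 k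
    rw [sub_zero] at hslope
    rw [le_div_iff₀' hf₁.slope_pos]
    exact (hslope.trans (abs_sub _ _)).trans (add_le_add hM hzero)
  have hk₂ : |expectedLoss Ps f₂ X k| ≤ C₂ + cu * ((M + (C₁ + cu * N)) / cl + N) :=
    (hf₂.abs_expectedLoss_le hPs hprob hX k).trans (by gcongr)
  exact (abs_sub _ _).trans (add_le_add hM hk₂)

end IsLossFunction

namespace HrAssumption

variable {Ω : Type*} [MeasurableSpace Ω] {Ps : Set (Measure Ω)} {T cl cu Ch : ℝ}
  {l u l₁ u₁ l₂ u₂ : ℝ → ℝ} {hb hb₁ hb₂ : ℝ → Ω → ℝ → ℝ}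

theorem continuousOn_lower (h : HrAssumption T cl cu Ch l u hb) : ContinuousOn l (Icc 0 T) := by
  obtain ⟨-, -, -, hl, -⟩ := h
  exact hl

theorem continuousOn_upper (h : HrAssumption T cl cu Ch l u hb) : ContinuousOn u (Icc 0 T) := by
  obtain ⟨-, -, -, -, hu, -⟩ := h
  exact hu

theorem abs_zero_le (h : HrAssumption T cl cu Ch l u hb) (t : ℝ) (ω : Ω) : |hb t ω 0| ≤ Ch := by
  obtain ⟨-, -, -, -, -, -, -, -, -, -, hgrowth, -⟩ := h
  simpa only [abs_zero, add_zero, mul_one] using hgrowth t ω 0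

theorem isLossFunction (hprob : ∀ P ∈ Ps, IsProbabilityMeasure P)
    (h : HrAssumption T cl cu Ch l u hb) (t : ℝ) : IsLossFunction Ps cl cu (hb t) := by
  have hzero := h.abs_zero_le t
  obtain ⟨hcl, hclu, -, -, -, -, -, hmeas, -, hmono, -, hslope⟩ := h
  refine ⟨hcl, hclu, hmeas t, (eIntegrable_const hprob Ch).mono (hmeas t 0) hzero,
    fun ω x y hxy => ?_, fun ω x y => (hslope t ω x y).2⟩
  have hle := (hslope t ω y x).1
  rwa [abs_of_nonneg (sub_nonneg.2 hxy),
    abs_of_nonneg (sub_nonneg.2 ((hmono t ω).monotone hxy))] at hle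

theorem sublinE_abs_zero_le (hPs : Ps.Nonempty) (hprob : ∀ P ∈ Ps, IsProbabilityMeasure P)
    (h : HrAssumption T cl cu Ch l u hb) (t : ℝ) : (sublinE Ps fun ω => |hb t ω 0|) ≤ Ch :=
  (sublinE_mono hPs (h.isLossFunction hprob t).eIntegrable_zero.abs (eIntegrable_const hprob Ch)
    (h.abs_zero_le t)).trans_eq (sublinE_const hPs hprob Ch)

theorem bddAbove_max_abs_barrier_sub (h₁ : HrAssumption T cl cu Ch l₁ u₁ hb₁)
    (h₂ : HrAssumption T cl cu Ch l₂ u₂ hb₂) :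
    BddAbove ((fun s => max |l₁ s - l₂ s| |u₁ s - u₂ s|) '' Icc 0 T) := by
  have hcont : ContinuousOn (fun s => max |l₁ s - l₂ s| |u₁ s - u₂ s|) (Icc 0 T) :=
    (h₁.continuousOn_lower.sub h₂.continuousOn_lower).abs.sup
      (h₁.continuousOn_upper.sub h₂.continuousOn_upper).abs
  exact isCompact_Icc.bddAbove_image hcont

theorem bddAbove_abs_Hbar_sub (hPs : Ps.Nonempty) (hprob : ∀ P ∈ Ps, IsProbabilityMeasure P)
    (h₁ : HrAssumption T cl cu Ch l₁ u₁ hb₁) (h₂ : HrAssumption T cl cu Ch l₂ u₂ hb₂)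
    {S : ℝ → Ω → ℝ} (hS : MeanContinuous Ps T S) {x b : ℝ → ℝ} (hbc : ContinuousOn b (Icc 0 T))
    (hx : ∀ s ∈ Icc 0 T, Hbar Ps hb₁ s (x s) (S s) = b s) :
    BddAbove ((fun s => |Hbar Ps hb₁ s (x s) (S s) - Hbar Ps hb₂ s (x s) (S s)|) '' Icc 0 T) := by
  obtain ⟨M, hM⟩ := isCompact_Icc.exists_bound_of_continuousOn hbc
  obtain ⟨N, hN⟩ := hS.bddAbove_sublinE_abs hPs
  refine ⟨M + (Ch + cu * ((M + (Ch + cu * N)) / cl + N)), forall_mem_image.2 fun s hs => ?_⟩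
  have hxM : |Hbar Ps hb₁ s (x s) (S s)| ≤ M := (congrArg _ (hx s hs)).trans_le (hM s hs)
  simp only [Hbar_eq_expectedLoss] at hxM ⊢
  exact (h₁.isLossFunction hprob s).abs_expectedLoss_sub_expectedLoss_le hPs hprob
    (h₂.isLossFunction hprob s) (hS.1 s hs) (h₁.sublinE_abs_zero_le hPs hprob s)
    (h₂.sublinE_abs_zero_le hPs hprob s) (hN (mem_image_of_mem _ hs)) hxM

theorem bddAbove_max_abs_Hbar_sub (hPs : Ps.Nonempty) (hprob : ∀ P ∈ Ps, IsProbabilityMeasure P)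
    (h₁ : HrAssumption T cl cu Ch l₁ u₁ hb₁) (h₂ : HrAssumption T cl cu Ch l₂ u₂ hb₂)
    {S : ℝ → Ω → ℝ} (hS : MeanContinuous Ps T S) {L U : ℝ → ℝ}
    (hL : ∀ s ∈ Icc 0 T, Hbar Ps hb₁ s (L s) (S s) = l₁ s)
    (hU : ∀ s ∈ Icc 0 T, Hbar Ps hb₁ s (U s) (S s) = u₁ s) :
    BddAbove ((fun s => max |Hbar Ps hb₁ s (L s) (S s) - Hbar Ps hb₂ s (L s) (S s)|
      |Hbar Ps hb₁ s (U s) (S s) - Hbar Ps hb₂ s (U s) (S s)|) '' Icc 0 T) := by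
  obtain ⟨A, hA⟩ := bddAbove_abs_Hbar_sub hPs hprob h₁ h₂ hS h₁.continuousOn_lower hL
  obtain ⟨B, hB⟩ := bddAbove_abs_Hbar_sub hPs hprob h₁ h₂ hS h₁.continuousOn_upper hU
  exact ⟨max A B, forall_mem_image.2 fun s hs =>
    max_le_max (hA (mem_image_of_mem _ hs)) (hB (mem_image_of_mem _ hs))⟩

end HrAssumption

theorem le_of_continuousOn_of_forall_lt_imp_le {a b B : ℝ} {f : ℝ → ℝ} (hab : a ≤ b)
    (hf : ContinuousOn f (Icc a b)) (hb : f b ≤ B)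
    (h : ∀ s ∈ Ioo a b, (∀ v ∈ Icc a s, B < f v) → f a ≤ f s) : f a ≤ B := by
  by_contra! ha
  obtain ⟨τ, ⟨hτ, hfτ : f τ ≤ B⟩, hτ_least⟩ :=
    (isCompact_Icc.of_isClosed_subset (hf.preimage_isClosed_of_isClosed isClosed_Icc isClosed_Iic)
      inter_subset_left).exists_isLeast ⟨b, right_mem_Icc.2 hab, hb⟩
  have haτ : a < τ := hτ.1.lt_of_ne fun heq => absurd hfτ (heq ▸ ha.not_ge)
  have hlt (v) (hv : v ∈ Ico a τ) : B < f v := by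
    by_contra! hvB
    exact hv.2.not_ge (hτ_least ⟨⟨hv.1, hv.2.le.trans hτ.2⟩, hvB⟩)
  have hle (s) (hs : s ∈ Ioo a τ) : f a ≤ f s :=
    h s ⟨hs.1, hs.2.trans_le hτ.2⟩ fun v hv => hlt v ⟨hv.1, hv.2.trans_lt hs.2⟩
  have := right_nhdsWithin_Ioo_neBot haτ
  have hlim : Tendsto f (nhdsWithin τ (Ioo a τ)) (nhds (f τ)) :=
    (hf τ hτ).mono_left (nhdsWithin_mono _ fun s hs => ⟨hs.1.le, hs.2.le.trans hτ.2⟩)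
  have hfa : f a ≤ f τ := ge_of_tendsto hlim (eventually_mem_nhdsWithin.mono hle)
  linarith

theorem MinimalityIncr.sub_le {T : ℝ} {φ₁ l₁ u₁ R₁ φ₂ l₂ u₂ R₂ : ℝ → ℝ}
    (hmin₁ : MinimalityIncr T φ₁ l₁ u₁ R₁) (hmin₂ : MinimalityIncr T φ₂ l₂ u₂ R₂)
    (hR₁ : ContinuousOn R₁ (Icc 0 T)) (hR₂ : ContinuousOn R₂ (Icc 0 T))
    {t B : ℝ} (ht : t ∈ Icc 0 T) (hB : 0 ≤ B)
    (hl : ∀ v ∈ Icc t T, φ₁ v ≤ l₁ v → (R₁ T - R₁ v) - (R₂ T - R₂ v) ≤ B)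
    (hu : ∀ v ∈ Icc t T, u₂ v ≤ φ₂ v → (R₁ T - R₁ v) - (R₂ T - R₂ v) ≤ B) :
    (R₁ T - R₁ t) - (R₂ T - R₂ t) ≤ B := by
  have hcont : ContinuousOn (fun v => (R₁ T - R₁ v) - (R₂ T - R₂ v)) (Icc t T) :=
    ((continuousOn_const.sub hR₁).sub (continuousOn_const.sub hR₂)).mono
      (Icc_subset_Icc_left ht.1)
  refine le_of_continuousOn_of_forall_lt_imp_le
    (f := fun v => (R₁ T - R₁ v) - (R₂ T - R₂ v)) ht.2 hcont
    (by simpa only [sub_self] using hB) fun s hs habove => ?_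
  have hR₁_anti : R₁ s ≤ R₁ t := (hmin₁ t s ht.1 hs.1 hs.2.le).2 fun v htv hvs =>
    lt_of_not_ge fun hv => (habove v ⟨htv.le, hvs⟩).not_ge (hl v ⟨htv.le, hvs.trans hs.2.le⟩ hv)
  have hR₂_mono : R₂ t ≤ R₂ s := (hmin₂ t s ht.1 hs.1 hs.2.le).1 fun v htv hvs =>
    lt_of_not_ge fun hv => (habove v ⟨htv.le, hvs⟩).not_ge (hu v ⟨htv.le, hvs.trans hs.2.le⟩ hv)
  linarith

namespace IsBSPsol

variable {Ω : Type*} [MeasurableSpace Ω] {Ps : Set (Measure Ω)} {T cl cu : ℝ}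

theorem sublinE_loss_eq {hb : ℝ → Ω → ℝ → ℝ} {l u R : ℝ → ℝ} {Ybar Y : ℝ → Ω → ℝ}
    (hsol : IsBSPsol Ps T hb l u Ybar Y R) {t : ℝ} (ht : t ∈ Icc 0 T) :
    (sublinE Ps fun ω => hb t ω (Y t ω)) = expectedLoss Ps (hb t) (Ybar t) (R T - R t) := by
  have hY (ω) : Y t ω = R T - R t + Ybar t ω := by rw [hsol.1 t ht ω]; ring
  simp only [expectedLoss, hY]

variable {hb₁ hb₂ : ℝ → Ω → ℝ → ℝ} {l₁ u₁ l₂ u₂ R₁ R₂ L U : ℝ → ℝ}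
  {Ybar₁ Ybar₂ Y₁ Y₂ : ℝ → Ω → ℝ}

theorem reflection_sub_le_of_loss_le (hPs : Ps.Nonempty)
    (hprob : ∀ P ∈ Ps, IsProbabilityMeasure P) (hsol₁ : IsBSPsol Ps T hb₁ l₁ u₁ Ybar₁ Y₁ R₁)
    (hsol₂ : IsBSPsol Ps T hb₂ l₂ u₂ Ybar₂ Y₂ R₂) {t x b₁ b₂ B : ℝ} (ht : t ∈ Icc 0 T)
    (hf₁ : IsLossFunction Ps cl cu (hb₁ t)) (hf₂ : IsLossFunction Ps cl cu (hb₂ t))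
    (hYbar₁ : EIntegrable Ps (Ybar₁ t)) (hYbar₂ : EIntegrable Ps (Ybar₂ t))
    (hx : Hbar Ps hb₁ t x (Ybar₂ t) = b₁)
    (hgap : (cu * sublinE Ps fun ω => |Ybar₁ t ω - Ybar₂ t ω|) +
      |Hbar Ps hb₁ t x (Ybar₂ t) - Hbar Ps hb₂ t x (Ybar₂ t)| + |b₁ - b₂| ≤ cl * B)
    (h₁ : (sublinE Ps fun ω => hb₁ t ω (Y₁ t ω)) ≤ b₁)
    (h₂ : b₂ ≤ sublinE Ps fun ω => hb₂ t ω (Y₂ t ω)) :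
    (R₁ T - R₁ t) - (R₂ T - R₂ t) ≤ B := by
  subst hx
  rw [hsol₁.sublinE_loss_eq ht, Hbar_eq_expectedLoss] at h₁
  rw [hsol₂.sublinE_loss_eq ht] at h₂
  simp only [Hbar_eq_expectedLoss] at hgap
  have hsub :=
    hf₁.mul_sub_le_of_expectedLoss_le_of_le_expectedLoss hPs hprob hf₂ hYbar₁ hYbar₂ h₁ h₂
  exact le_of_mul_le_mul_left (hsub.trans hgap) hf₁.slope_pos

theorem reflection_sub_le_of_le_loss (hPs : Ps.Nonempty)
    (hprob : ∀ P ∈ Ps, IsProbabilityMeasure P) (hsol₁ : IsBSPsol Ps T hb₁ l₁ u₁ Ybar₁ Y₁ R₁)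
    (hsol₂ : IsBSPsol Ps T hb₂ l₂ u₂ Ybar₂ Y₂ R₂) {t x b₁ b₂ B : ℝ} (ht : t ∈ Icc 0 T)
    (hf₁ : IsLossFunction Ps cl cu (hb₁ t)) (hf₂ : IsLossFunction Ps cl cu (hb₂ t))
    (hYbar₁ : EIntegrable Ps (Ybar₁ t)) (hYbar₂ : EIntegrable Ps (Ybar₂ t))
    (hx : Hbar Ps hb₁ t x (Ybar₂ t) = b₁)
    (hgap : (cu * sublinE Ps fun ω => |Ybar₁ t ω - Ybar₂ t ω|) +
      |Hbar Ps hb₁ t x (Ybar₂ t) - Hbar Ps hb₂ t x (Ybar₂ t)| + |b₁ - b₂| ≤ cl * B)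
    (h₁ : b₁ ≤ sublinE Ps fun ω => hb₁ t ω (Y₁ t ω))
    (h₂ : (sublinE Ps fun ω => hb₂ t ω (Y₂ t ω)) ≤ b₂) :
    (R₂ T - R₂ t) - (R₁ T - R₁ t) ≤ B := by
  subst hx
  rw [hsol₁.sublinE_loss_eq ht, Hbar_eq_expectedLoss] at h₁
  rw [hsol₂.sublinE_loss_eq ht] at h₂
  simp only [Hbar_eq_expectedLoss] at hgap
  have hsub :=
    hf₁.mul_sub_le_of_le_expectedLoss_of_expectedLoss_le hPs hprob hf₂ hYbar₁ hYbar₂ h₁ h₂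
  exact le_of_mul_le_mul_left (hsub.trans hgap) hf₁.slope_pos

theorem abs_reflection_sub_le (hPs : Ps.Nonempty) (hprob : ∀ P ∈ Ps, IsProbabilityMeasure P)
    (hsol₁ : IsBSPsol Ps T hb₁ l₁ u₁ Ybar₁ Y₁ R₁) (hsol₂ : IsBSPsol Ps T hb₂ l₂ u₂ Ybar₂ Y₂ R₂)
    {t B : ℝ} (ht : t ∈ Icc 0 T)
    (hf₁ : ∀ s ∈ Icc t T, IsLossFunction Ps cl cu (hb₁ s))
    (hf₂ : ∀ s ∈ Icc t T, IsLossFunction Ps cl cu (hb₂ s))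
    (hYbar₁ : ∀ s ∈ Icc t T, EIntegrable Ps (Ybar₁ s))
    (hYbar₂ : ∀ s ∈ Icc t T, EIntegrable Ps (Ybar₂ s))
    (hL : ∀ s ∈ Icc t T, Hbar Ps hb₁ s (L s) (Ybar₂ s) = l₁ s)
    (hU : ∀ s ∈ Icc t T, Hbar Ps hb₁ s (U s) (Ybar₂ s) = u₁ s)
    (hgapL : ∀ s ∈ Icc t T, (cu * sublinE Ps fun ω => |Ybar₁ s ω - Ybar₂ s ω|) +
      |Hbar Ps hb₁ s (L s) (Ybar₂ s) - Hbar Ps hb₂ s (L s) (Ybar₂ s)| + |l₁ s - l₂ s| ≤ cl * B)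
    (hgapU : ∀ s ∈ Icc t T, (cu * sublinE Ps fun ω => |Ybar₁ s ω - Ybar₂ s ω|) +
      |Hbar Ps hb₁ s (U s) (Ybar₂ s) - Hbar Ps hb₂ s (U s) (Ybar₂ s)| + |u₁ s - u₂ s| ≤ cl * B) :
    |(R₁ T - R₁ t) - (R₂ T - R₂ t)| ≤ B := by
  have htt : t ∈ Icc t T := left_mem_Icc.2 ht.2
  have hB : 0 ≤ B := by
    have hcu := (hf₁ t htt).upper_slope_nonneg
    have hdist : 0 ≤ sublinE Ps fun ω => |Ybar₁ t ω - Ybar₂ t ω| :=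
      sublinE_nonneg fun ω => abs_nonneg _
    exact nonneg_of_mul_nonneg_right (le_trans (by positivity) (hgapL t htt)) (hf₁ t htt).slope_pos
  have htT {s} (hs : s ∈ Icc t T) : s ∈ Icc 0 T := Icc_subset_Icc_left ht.1 hs
  have hle {s x b₁ b₂} (hs : s ∈ Icc t T) :=
    hsol₁.reflection_sub_le_of_loss_le (x := x) (b₁ := b₁) (b₂ := b₂) (B := B) hPs hprob hsol₂
      (htT hs) (hf₁ s hs) (hf₂ s hs) (hYbar₁ s hs) (hYbar₂ s hs)
  have hge {s x b₁ b₂} (hs : s ∈ Icc t T) :=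
    hsol₁.reflection_sub_le_of_le_loss (x := x) (b₁ := b₁) (b₂ := b₂) (B := B) hPs hprob hsol₂
      (htT hs) (hf₁ s hs) (hf₂ s hs) (hYbar₁ s hs) (hYbar₂ s hs)
  obtain ⟨-, hφ₁, hR₁, -, -, hmin₁⟩ := hsol₁
  obtain ⟨-, hφ₂, hR₂, -, -, hmin₂⟩ := hsol₂
  refine abs_sub_le_iff.2 ⟨hmin₁.sub_le hmin₂ hR₁ hR₂ ht hB ?_ ?_,
    hmin₂.sub_le hmin₁ hR₂ hR₁ ht hB ?_ ?_⟩ <;> intro s hs h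
  · exact hle hs (hL s hs) (hgapL s hs) h (hφ₂ s (htT hs)).1
  · exact hle hs (hU s hs) (hgapU s hs) (hφ₁ s (htT hs)).2 h
  · exact hge hs (hL s hs) (hgapL s hs) (hφ₁ s (htT hs)).1 h
  · exact hge hs (hU s hs) (hgapU s hs) h (hφ₂ s (htT hs)).2

end IsBSPsol

theorem stmt9_general {Ω : Type*} [MeasurableSpace Ω] {T cl cu t : ℝ} {Ps : Set (Measure Ω)}
    (hPs : Ps.Nonempty) (hprob : ∀ P ∈ Ps, IsProbabilityMeasure P) (ht : t ∈ Icc 0 T)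
    {l₁ u₁ l₂ u₂ R₁ R₂ L U : ℝ → ℝ} {hb₁ hb₂ : ℝ → Ω → ℝ → ℝ} {Ybar₁ Ybar₂ Y₁ Y₂ : ℝ → Ω → ℝ}
    (hf₁ : ∀ s ∈ Icc t T, IsLossFunction Ps cl cu (hb₁ s))
    (hf₂ : ∀ s ∈ Icc t T, IsLossFunction Ps cl cu (hb₂ s))
    (hYbar₁ : ∀ s ∈ Icc t T, EIntegrable Ps (Ybar₁ s))
    (hYbar₂ : ∀ s ∈ Icc t T, EIntegrable Ps (Ybar₂ s))
    (hL : ∀ s ∈ Icc t T, Hbar Ps hb₁ s (L s) (Ybar₂ s) = l₁ s)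
    (hU : ∀ s ∈ Icc t T, Hbar Ps hb₁ s (U s) (Ybar₂ s) = u₁ s)
    (hsol₁ : IsBSPsol Ps T hb₁ l₁ u₁ Ybar₁ Y₁ R₁) (hsol₂ : IsBSPsol Ps T hb₂ l₂ u₂ Ybar₂ Y₂ R₂)
    (hbdd_dist : BddAbove ((fun s => sublinE Ps fun ω => |Ybar₁ s ω - Ybar₂ s ω|) '' Icc t T))
    (hbdd_loss : BddAbove ((fun s => max
      |Hbar Ps hb₁ s (L s) (Ybar₂ s) - Hbar Ps hb₂ s (L s) (Ybar₂ s)|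
      |Hbar Ps hb₁ s (U s) (Ybar₂ s) - Hbar Ps hb₂ s (U s) (Ybar₂ s)|) '' Icc t T))
    (hbdd_barrier : BddAbove ((fun s => max |l₁ s - l₂ s| |u₁ s - u₂ s|) '' Icc t T)) :
    |(R₁ T - R₁ t) - (R₂ T - R₂ t)| ≤
      cu / cl * sSup ((fun s => sublinE Ps fun ω => |Ybar₁ s ω - Ybar₂ s ω|) '' Icc t T) +
      1 / cl * (sSup ((fun s => max
          |Hbar Ps hb₁ s (L s) (Ybar₂ s) - Hbar Ps hb₂ s (L s) (Ybar₂ s)|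
          |Hbar Ps hb₁ s (U s) (Ybar₂ s) - Hbar Ps hb₂ s (U s) (Ybar₂ s)|) '' Icc t T) +
        sSup ((fun s => max |l₁ s - l₂ s| |u₁ s - u₂ s|) '' Icc t T)) := by
  have hloss := hf₁ t (left_mem_Icc.2 ht.2)
  have hcl := hloss.slope_pos
  set D := sSup ((fun s => sublinE Ps fun ω => |Ybar₁ s ω - Ybar₂ s ω|) '' Icc t T)
  set A := sSup ((fun s : ℝ => max |Hbar Ps hb₁ s _ _ - _| _) '' Icc t T)
  set G := sSup ((fun s => max |l₁ s - l₂ s| |u₁ s - u₂ s|) '' Icc t T)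
  have hD (s) (hs : s ∈ Icc t T) : (cu * sublinE Ps fun ω => |Ybar₁ s ω - Ybar₂ s ω|) ≤ cu * D :=
    mul_le_mul_of_nonneg_left (le_csSup hbdd_dist (mem_image_of_mem _ hs)) hloss.upper_slope_nonneg
  have hA (s) (hs : s ∈ Icc t T) := max_le_iff.1 (le_csSup hbdd_loss (mem_image_of_mem _ hs))
  have hG (s) (hs : s ∈ Icc t T) := max_le_iff.1 (le_csSup hbdd_barrier (mem_image_of_mem _ hs))
  have hB : cl * (cu / cl * D + 1 / cl * (A + G)) = cu * D + A + G := by field_simp; ring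
  refine hsol₁.abs_reflection_sub_le hPs hprob hsol₂ ht hf₁ hf₂ hYbar₁ hYbar₂ hL hU
    (fun s hs => hB ▸ ?_) (fun s hs => hB ▸ ?_)
  · exact add_le_add (add_le_add (hD s hs) (hA s hs).1) (hG s hs).1
  · exact add_le_add (add_le_add (hD s hs) (hA s hs).2) (hG s hs).2

/-- stability estimate for the reflecting terms of two backward Skorokhod
problems with sublinear expectation, with data `(hb¹, l¹, u¹)` and `(hb², l², u²)` satisfying
(H_r) with the same constants. -/
theorem stmt9 {Ω : Type*} [MeasurableSpace Ω] (T cl cu Ch : ℝ) (hT : 0 < T)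
    (Ps : Set (Measure Ω)) (hPs : Ps.Nonempty) (hprob : ∀ P ∈ Ps, IsProbabilityMeasure P)
    (l1 u1 l2 u2 : ℝ → ℝ) (hb1 hb2 : ℝ → Ω → ℝ → ℝ)
    (hHr1 : HrAssumption T cl cu Ch l1 u1 hb1) (hHr2 : HrAssumption T cl cu Ch l2 u2 hb2)
    (L1 U1 : ℝ → (Ω → ℝ) → ℝ)
    (hL1 : ∀ t ∈ Icc (0:ℝ) T, ∀ X : Ω → ℝ, EIntegrable Ps X → Hbar Ps hb1 t (L1 t X) X = l1 t)
    (hU1 : ∀ t ∈ Icc (0:ℝ) T, ∀ X : Ω → ℝ, EIntegrable Ps X → Hbar Ps hb1 t (U1 t X) X = u1 t)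
    (Ybar1 Ybar2 : ℝ → Ω → ℝ)
    (hYbar1 : MeanContinuous Ps T Ybar1) (hYbar2 : MeanContinuous Ps T Ybar2)
    (hterm1L : l1 T ≤ sublinE Ps fun ω => hb1 T ω (Ybar1 T ω))
    (hterm1U : (sublinE Ps fun ω => hb1 T ω (Ybar1 T ω)) ≤ u1 T)
    (hterm2L : l2 T ≤ sublinE Ps fun ω => hb2 T ω (Ybar2 T ω))
    (hterm2U : (sublinE Ps fun ω => hb2 T ω (Ybar2 T ω)) ≤ u2 T)
    (Y1 Y2 : ℝ → Ω → ℝ) (R1 R2 : ℝ → ℝ)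
    (hsol1 : IsBSPsol Ps T hb1 l1 u1 Ybar1 Y1 R1)
    (hsol2 : IsBSPsol Ps T hb2 l2 u2 Ybar2 Y2 R2) :
    ∀ t ∈ Icc (0:ℝ) T,
      |(R1 T - R1 t) - (R2 T - R2 t)| ≤
        sSup ((fun s => |sublinE Ps (Ybar1 s) - sublinE Ps (Ybar2 s)|) '' Icc t T) +
        (2 * cu / cl) *
          sSup ((fun s => sublinE Ps fun ω => |Ybar1 s ω - Ybar2 s ω|) '' Icc t T) +
        (1 / cl) *
          (sSup ((fun s => max
              |Hbar Ps hb1 s (L1 s (Ybar2 s)) (Ybar2 s) -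
                Hbar Ps hb2 s (L1 s (Ybar2 s)) (Ybar2 s)|
              |Hbar Ps hb1 s (U1 s (Ybar2 s)) (Ybar2 s) -
                Hbar Ps hb2 s (U1 s (Ybar2 s)) (Ybar2 s)|) '' Icc t T) +
            sSup ((fun s => max |l1 s - l2 s| |u1 s - u2 s|) '' Icc t T)) := by
  intro t ht
  have hsub : Icc t T ⊆ Icc 0 T := Icc_subset_Icc_left ht.1
  have hL (s) (hs : s ∈ Icc 0 T) := hL1 s hs (Ybar2 s) (hYbar2.1 s hs)
  have hU (s) (hs : s ∈ Icc 0 T) := hU1 s hs (Ybar2 s) (hYbar2.1 s hs)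
  have hcl := hHr1.1
  have hcu := hcl.le.trans hHr1.2.1
  refine (stmt9_general hPs hprob ht (fun s _ => hHr1.isLossFunction hprob s)
    (fun s _ => hHr2.isLossFunction hprob s) (fun s hs => hYbar1.1 s (hsub hs))
    (fun s hs => hYbar2.1 s (hsub hs)) (fun s hs => hL s (hsub hs)) (fun s hs => hU s (hsub hs))
    hsol1 hsol2
    ((hYbar1.bddAbove_sublinE_abs_sub hPs hYbar2).mono (image_mono hsub))
    ((hHr1.bddAbove_max_abs_Hbar_sub hPs hprob hHr2 hYbar2 hL hU).mono (image_mono hsub))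
    ((hHr1.bddAbove_max_abs_barrier_sub hHr2).mono (image_mono hsub))).trans ?_
  gcongr ?_ + _
  refine le_add_of_nonneg_of_le (Real.sSup_nonneg (forall_mem_image.2 fun _ _ => abs_nonneg _))
    (mul_le_mul_of_nonneg_right ?_
      (Real.sSup_nonneg (forall_mem_image.2 fun _ _ => sublinE_nonneg fun _ => abs_nonneg _)))
  gcongr
  linarith
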